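/- Let S be a numerical semigroup of genus g with conductor c, and let K = K(S). Then the weights are related by W_K = W_S + 2g − c (an equality of integers; one has c ≤ 2g, so the right-hand side is W_S plus the nonnegative integer 2g−c). -/

import Mathlib

/-- A numerical semigroup: `0 ∈ S`, closed under addition, finite complement. -/
def IsNumericalSemigroup (S : Set ℕ) : Prop :=
  0 ∈ S ∧ (∀ a ∈ S, ∀ b ∈ S, a + b ∈ S) ∧ (Sᶜ : Set ℕ).Finite

/-- The genus: number of gaps. -/
noncomputable def sgGenus (T : Set ℕ) : ℕ := (Tᶜ : Set ℕ).ncard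

/-- The weight `W_T = Σ gaps − binomial(g+1,2)`, as an integer. -/
noncomputable def sgWeight (T : Set ℕ) : ℤ :=
  (∑ᶠ x ∈ (Tᶜ : Set ℕ), (x : ℤ)) - ((sgGenus T + 1).choose 2 : ℤ)

/-- The conductor: least `c` with `n ∈ S` for all `n ≥ c`. -/
noncomputable def sgConductor (S : Set ℕ) : ℕ :=
  sInf {c : ℕ | ∀ n : ℕ, c ≤ n → n ∈ S}

/-- `K(S) = {a ∈ ℕ | c − 1 − a ∉ S}`, the difference computed in `ℤ`,
no negative integer belonging to `S`. -/
def Kset (S : Set ℕ) : Set ℕ :=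
  {a : ℕ | ¬ ∃ s ∈ S, (s : ℤ) = (sgConductor S : ℤ) - 1 - (a : ℤ)}

/-- `S` is symmetric if for all `0 ≤ a ≤ c−1`, `a ∈ S ↔ c−1−a ∉ S`. -/
def IsSymmetricSgp (S : Set ℕ) : Prop :=
  ∀ a : ℕ, a < sgConductor S → (a ∈ S ↔ (sgConductor S - 1 - a) ∉ S)

theorem mem_of_sgConductor_le {S : Set ℕ} (hS : Sᶜ.Finite) {n : ℕ}
    (hn : sgConductor S ≤ n) : n ∈ S := by
  have hne : {c : ℕ | ∀ n : ℕ, c ≤ n → n ∈ S}.Nonempty := by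
    obtain ⟨b, hb⟩ := hS.bddAbove
    refine ⟨b + 1, fun n hn => ?_⟩
    by_contra h
    have := hb h
    omega
  exact Nat.sInf_mem hne n hn

theorem sgConductor_sub_one_notMem {S : Set ℕ} (hS : Sᶜ.Finite)
    (hc : 0 < sgConductor S) : sgConductor S - 1 ∉ S := by
  intro h
  have : sgConductor S ≤ sgConductor S - 1 := Nat.sInf_le fun n hn => by
    rcases hn.eq_or_lt with rfl | hlt
    · exact h
    · exact mem_of_sgConductor_le hS (by omega)
  omega

open Classical in
theorem compl_eq_filter_range_sgConductor {S : Set ℕ} (hS : Sᶜ.Finite) :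
    Sᶜ = ((Finset.range (sgConductor S)).filter (· ∉ S) : Finset ℕ) := by
  ext x
  have := mem_of_sgConductor_le hS (n := x)
  simp only [Set.mem_compl_iff, Finset.coe_filter, Finset.mem_range, Set.mem_ofPred_eq]
  grind

open Classical in
theorem compl_Kset_eq_image (S : Set ℕ) :
    (Kset S)ᶜ = (((Finset.range (sgConductor S)).filter (· ∈ S)).image
      (sgConductor S - 1 - ·) : Finset ℕ) := by
  ext x
  simp only [Kset, Set.mem_compl_iff, Set.mem_ofPred_eq, not_not, Finset.coe_image,
    Finset.coe_filter, Finset.mem_range, Set.mem_image]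
  constructor
  · rintro ⟨s, hs, h⟩
    exact ⟨s, ⟨by omega, hs⟩, by omega⟩
  · rintro ⟨s, ⟨h, hs⟩, rfl⟩
    exact ⟨s, hs, by omega⟩

theorem two_mul_sgWeight_of_compl_eq {T : Set ℕ} {F : Finset ℕ} (h : Tᶜ = F) :
    2 * sgWeight T = 2 * ∑ x ∈ F, (x : ℤ) - (F.card + 1) * F.card := by
  have hchoose : (F.card + 1).choose 2 * 2 = (F.card + 1) * F.card := by
    simpa [Finset.sum_range_id, Nat.choose_two_right] using
      Finset.sum_range_id_mul_two (F.card + 1)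
  have hchoose' : ((F.card + 1).choose 2 : ℤ) * 2 = (F.card + 1) * F.card := by
    exact_mod_cast hchoose
  rw [sgWeight, sgGenus, h, Set.ncard_coe_finset, finsum_mem_coe_finset]
  linarith

/-- `W_K = W_S + 2g − c` (an equality of integers; moreover `c ≤ 2g`). -/
theorem weight_Kset_eq (S : Set ℕ) (hS : IsNumericalSemigroup S)
    (g : ℕ) (hg : sgGenus S = g) :
    sgWeight (Kset S) = sgWeight S + 2 * (g : ℤ) - (sgConductor S : ℤ) ∧
      sgConductor S ≤ 2 * g := by
  classical
  obtain ⟨-, hadd, hfin⟩ := hS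
  have hcS := compl_eq_filter_range_sgConductor hfin
  have hcK := compl_Kset_eq_image S
  have hgap := sgConductor_sub_one_notMem hfin
  have hWS := two_mul_sgWeight_of_compl_eq hcS
  have hWK := two_mul_sgWeight_of_compl_eq hcK
  rw [sgGenus, hcS, Set.ncard_coe_finset] at hg
  set c := sgConductor S
  have hinj : Set.InjOn (c - 1 - ·) ((Finset.range c).filter (· ∈ S) : Set ℕ) := by
    intro a ha b hb hab
    simp only [Finset.coe_filter, Finset.mem_range, Set.mem_ofPred_eq] at ha hb hab
    omega
  have hcard := Finset.card_filter_add_card_filter_not (s := Finset.range c) (· ∈ S)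
  have hsum := Finset.sum_filter_add_sum_filter_not (Finset.range c) (· ∈ S) (fun x => (x : ℤ))
  have hrefl : ∑ x ∈ (Finset.range c).filter (· ∈ S), ((c - 1 - x : ℕ) : ℤ) =
      ((Finset.range c).filter (· ∈ S)).card * ((c : ℤ) - 1)
        - ∑ x ∈ (Finset.range c).filter (· ∈ S), (x : ℤ) := by
    rw [← nsmul_eq_mul, ← Finset.sum_const, ← Finset.sum_sub_distrib]
    refine Finset.sum_congr rfl fun x hx => ?_
    have := Finset.mem_range.1 (Finset.mem_filter.1 hx).1
    omega
  have htotal : (∑ x ∈ Finset.range c, (x : ℤ)) * 2 = c * ((c : ℤ) - 1) := by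
    have := Finset.sum_range_id_mul_two c
    rcases Nat.eq_zero_or_pos c with h0 | hpos
    · simp [h0]
    · zify [Nat.succ_le_of_lt hpos] at this
      exact this
  have hle : ((Finset.range c).filter (· ∈ S)).card ≤ g := by
    rw [← hg, ← Finset.card_image_of_injOn hinj]
    refine Finset.card_le_card fun x hx => ?_
    obtain ⟨s, hs, rfl⟩ := Finset.mem_image.1 hx
    obtain ⟨hsc, hsS⟩ := Finset.mem_filter.1 hs
    rw [Finset.mem_range] at hsc
    refine Finset.mem_filter.2 ⟨Finset.mem_range.2 (by omega), fun hmem => ?_⟩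
    refine hgap (by omega) ?_
    have := hadd _ hsS _ hmem
    rwa [show s + (c - 1 - s) = c - 1 by omega] at this
  rw [Finset.card_image_of_injOn hinj, Finset.sum_image hinj, hrefl] at hWK
  rw [hg] at hcard hWS
  rw [Finset.card_range] at hcard
  refine ⟨?_, by omega⟩
  have hn : ((Finset.card {x ∈ Finset.range c | x ∈ S} : ℕ) : ℤ) = c - g := by omega
  rw [hn] at hWK
  linarith
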